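/- arXiv:1406.6904 — 2 statements merged into one kernel-verified Lean document; each statement's English description precedes it below -/
import Mathlib

section
/- Let A > 1. There exists a constant C > 0, depending only on A, such that for every radial non-increasing weight u on 𝔻 satisfying (LOG 1) with constant A, every holomorphic f on 𝔻 with u(z)|f(z)| ≤ 1 for all z ∈ 𝔻, every integer t ≥ 0 and every z ∈ 𝔻 with r_t ≤ |z| ≤ r_{t+1}, one has Σ_{κ=t+2}^{∞} |f(r_{κ+1}z) − f(r_κ z)| ≤ C/u(z). -/
noncomputable section

open Complex

/-- The open unit disc in ℂ. -/
def uD : Set ℂ := {z : ℂ | ‖z‖ < 1}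

/-- Holomorphic on the unit disc. -/
def Holo (f : ℂ → ℂ) : Prop := DifferentiableOn ℂ f uD

/-- A weight on 𝔻: continuous and strictly positive. -/
def IsWeight (v : ℂ → ℝ) : Prop :=
  ContinuousOn v uD ∧ ∀ z ∈ uD, 0 < v z

/-- Radial weight. -/
def Radial (v : ℂ → ℝ) : Prop :=
  ∀ z ∈ uD, ∀ w ∈ uD, ‖z‖ = ‖w‖ → v z = v w

/-- Non-increasing in the modulus. -/
def NonInc (v : ℂ → ℝ) : Prop :=
  ∀ z ∈ uD, ∀ w ∈ uD, ‖z‖ ≤ ‖w‖ → v w ≤ v z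

/-- r₀ = 0, r_κ = 1 - 2^(-2^κ) for κ ≥ 1. -/
def rseq (κ : ℕ) : ℝ := if κ = 0 then 0 else 1 - 1 / 2 ^ (2 ^ κ)

/-- Condition (LOG 1) for a single radial weight. -/
def Log1 (A : ℝ) (v : ℂ → ℝ) : Prop :=
  ∀ κ : ℕ, v (rseq κ : ℂ) ≤ A * v (rseq (κ + 1) : ℂ)

/-- Condition (LOG 2) for a single radial weight. -/
def Log2 (a : ℝ) (v : ℂ → ℝ) : Prop :=
  ∀ κ : ℕ, v (rseq (κ + 1) : ℂ) ≤ a * v (rseq κ : ℂ)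

/-- The weight tends to 0 as |z| → 1. -/
def VanishAtOne (v : ℂ → ℝ) : Prop :=
  ∀ ε > 0, ∃ r : ℝ, r < 1 ∧ ∀ z ∈ uD, r ≤ ‖z‖ → v z ≤ ε

/-- Associated growth function w~ of a growth condition w. -/
def growthTilde (w : ℂ → ℝ) (z : ℂ) : ℝ :=
  sSup {t : ℝ | ∃ g : ℂ → ℂ, Holo g ∧ (∀ x ∈ uD, ‖g x‖ ≤ w x) ∧ t = ‖g z‖}

/-- Associated weight ṽ = 1/(1/v)~. -/
def assocWeight (v : ℂ → ℝ) (z : ℂ) : ℝ := (growthTilde (fun x => 1 / v x) z)⁻¹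

/-- Monotonicity of the double sequence: decreasing in n, increasing in N. -/
def MonoSeq (a : ℕ → ℕ → ℂ → ℝ) : Prop :=
  ∀ N n, ∀ z ∈ uD, a N (n + 1) z ≤ a N n z ∧ a N n z ≤ a (N + 1) n z

/-- Condition (LOG) for a double sequence with constants 0 < a < 1 < A. -/
def SeqLOG (aa A : ℝ) (a : ℕ → ℕ → ℂ → ℝ) : Prop :=
  ∀ N n, Radial (a N n) ∧ NonInc (a N n) ∧ VanishAtOne (a N n) ∧
    Log1 A (a N n) ∧ Log2 aa (a N n)

/-- Condition (Q). -/
def CondQ (a : ℕ → ℕ → ℂ → ℝ) : Prop :=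
  ∀ N, ∃ M ≥ N, ∃ n, ∀ K ≥ M, ∀ m, ∀ ε > 0, ∃ k, ∃ S > 0,
    ∀ z ∈ uD, 1 / a M m z ≤ max (ε / a N n z) (S / a K k z)

/-- Condition (wQ). -/
def CondwQ (a : ℕ → ℕ → ℂ → ℝ) : Prop :=
  ∀ N, ∃ M ≥ N, ∃ n, ∀ K ≥ M, ∀ m, ∃ k, ∃ S > 0,
    ∀ z ∈ uD, 1 / a M m z ≤ max (S / a N n z) (S / a K k z)

/-- Condition (Q)~. -/
def CondQTilde (a : ℕ → ℕ → ℂ → ℝ) : Prop :=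
  ∀ N, ∃ M ≥ N, ∃ n, ∀ K ≥ M, ∀ m, ∀ ε > 0, ∃ k, ∃ S > 0,
    ∀ z ∈ uD, growthTilde (fun x => 1 / a M m x) z ≤
      growthTilde (fun x => max (ε / a N n x) (S / a K k x)) z

/-- Pointwise maximum max_{N=1,…,L} a_{N,n(N)}. -/
def finMax (a : ℕ → ℕ → ℂ → ℝ) (nn : ℕ → ℕ) (L : ℕ) (z : ℂ) : ℝ :=
  sSup {t : ℝ | ∃ N, 1 ≤ N ∧ N ≤ L ∧ t = a N (nn N) z}

/-- Condition (B). -/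
def CondB (a : ℕ → ℕ → ℂ → ℝ) : Prop :=
  ∀ nn : ℕ → ℕ, ∃ m, ∀ M, ∃ L, 1 ≤ L ∧ ∃ c > 0,
    ∀ z ∈ uD, a M m z ≤ c * finMax a nn L z

/-- Condition (B)~. -/
def CondBTilde (a : ℕ → ℕ → ℂ → ℝ) : Prop :=
  ∀ nn : ℕ → ℕ, ∃ m, ∀ M, ∃ L, 1 ≤ L ∧ ∃ c > 0,
    ∀ z ∈ uD, assocWeight (a M m) z ≤ c * assocWeight (finMax a nn L) z

/-- A weight is essential. -/
def Essential (v : ℂ → ℝ) : Prop :=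
  ∃ C > 0, ∀ z ∈ uD,
    growthTilde (fun x => 1 / v x) z ≤ 1 / v z ∧
    1 / v z ≤ C * growthTilde (fun x => 1 / v x) z

/-- Condition (Σ). -/
def CondSigma (a : ℕ → ℕ → ℂ → ℝ) : Prop :=
  ∀ N, ∃ K ≥ N, ∀ k, ∃ n ≥ k, ∀ ε > 0, ∃ Q : Set ℂ,
    IsCompact Q ∧ Q ⊆ uD ∧ ∀ z ∈ uD \ Q, a N n z / a K k z ≤ ε

/-- The Banach space Ha(𝔻) as a set of functions. -/
def HaSet (v : ℂ → ℝ) : Set (ℂ → ℂ) :=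
  {f | Holo f ∧ ∃ C : ℝ, ∀ z ∈ uD, v z * ‖f z‖ ≤ C}

theorem rseq_succ_eq (n : ℕ) : rseq (n + 1) = 1 - 1 / 2 ^ (2 ^ (n + 1)) := by
  simp [rseq]

theorem rseq_nonneg' (n : ℕ) : 0 ≤ rseq n := by
  unfold rseq
  split_ifs
  · exact le_rfl
  · have : (1 : ℝ) / 2 ^ (2 ^ n) ≤ 1 := by
      rw [div_le_one (by positivity)]
      exact one_le_pow₀ (by norm_num)
    linarith

theorem rseq_lt_one' (n : ℕ) : rseq n < 1 := by
  unfold rseq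
  split_ifs
  · exact one_pos
  · have : (0 : ℝ) < 1 / 2 ^ (2 ^ n) := by positivity
    linarith

theorem rseq_mem_uD (n : ℕ) : (rseq n : ℂ) ∈ uD := by
  simp only [uD, Set.mem_setOf_eq, Complex.norm_real, Real.norm_eq_abs,
    abs_of_nonneg (rseq_nonneg' n)]
  exact rseq_lt_one' n

theorem norm_rseq (n : ℕ) : ‖(rseq n : ℂ)‖ = rseq n := by
  rw [Complex.norm_real, Real.norm_eq_abs, abs_of_nonneg (rseq_nonneg' n)]

theorem rseq_diff (t j : ℕ) :
    |rseq (t + 2 + j + 1) - rseq (t + 2 + j)| ≤ 1 / 2 ^ (2 ^ (t + 1)) * (1 / 2) ^ j := by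
  have h1 := rseq_succ_eq (t + 2 + j)
  have h2 : rseq (t + 2 + j) = 1 - 1 / 2 ^ (2 ^ (t + 2 + j)) := by
    simp [rseq]
  have h3 : (1 : ℝ) / 2 ^ (2 ^ (t + 2 + j + 1)) ≤ 1 / 2 ^ (2 ^ (t + 2 + j)) := by
    apply one_div_le_one_div_of_le (by positivity)
    apply pow_le_pow_right₀ (by norm_num)
    apply pow_le_pow_right₀ (by norm_num)
    omega
  have h4 : (1 : ℝ) / 2 ^ (2 ^ (t + 2 + j)) ≤ 1 / 2 ^ (2 ^ (t + 1)) * (1 / 2) ^ j := by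
    rw [one_div_pow, one_div_mul_one_div, ← pow_add]
    apply one_div_le_one_div_of_le (by positivity)
    apply pow_le_pow_right₀ (by norm_num)
    have a1 : j < 2 ^ j := Nat.lt_two_pow_self
    have a2 : 1 ≤ 2 ^ t := Nat.one_le_two_pow
    have a3 : 2 ^ (t + 2 + j) = 4 * (2 ^ t * 2 ^ j) := by ring
    have a4 : 2 ^ (t + 1) = 2 * 2 ^ t := by ring
    rw [a3, a4]
    nlinarith
  have h5 : (0 : ℝ) < 1 / 2 ^ (2 ^ (t + 2 + j + 1)) := by positivity
  rw [abs_le]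
  constructor <;> linarith

/-- tail sum estimate Σ_{κ=t+2}^∞ |f(r_{κ+1}z) − f(r_κ z)| ≤ C/u(z)
with C depending only on A. -/
theorem tail_sum_estimate (A : ℝ) (hA : 1 < A) :
    ∃ C > 0, ∀ u : ℂ → ℝ, IsWeight u → Radial u → NonInc u → Log1 A u →
      ∀ f : ℂ → ℂ, Holo f → (∀ z ∈ uD, u z * ‖f z‖ ≤ 1) →
      ∀ t : ℕ, ∀ z ∈ uD, rseq t ≤ ‖z‖ → ‖z‖ ≤ rseq (t + 1) →
        ∑' j : ℕ, ‖f ((rseq (t + 2 + j + 1) : ℂ) * z) -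
          f ((rseq (t + 2 + j) : ℂ) * z)‖ ≤ C / u z := by
  refine ⟨4 * A ^ 2, by positivity, ?_⟩
  intro u hu _ hni hl f hf hb t z hz hz1 hz2
  have huz := hu.2 z hz
  set E : ℝ := 1 / 2 ^ (2 ^ (t + 1)) with hE
  have hE0 : 0 < E := by positivity
  have hE1 : E ≤ 1 / 2 := by
    apply one_div_le_one_div_of_le (by norm_num)
    calc (2 : ℝ) = 2 ^ 1 := by norm_num
      _ ≤ _ := pow_le_pow_right₀ (by norm_num) Nat.one_le_two_pow
  have hr1 : rseq (t + 1) = 1 - E := rseq_succ_eq t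
  have hr2 : rseq (t + 2) = 1 - E ^ 2 := by
    rw [rseq_succ_eq (t + 1), hE, one_div_pow, ← pow_mul, ← pow_succ]
  set M : ℝ := A ^ 2 / u z with hM
  have hM0 : 0 < M := by positivity
  -- bound on f
  have hfb : ∀ w : ℂ, ‖w‖ ≤ rseq (t + 2) → ‖f w‖ ≤ M := by
    intro w hw
    have hwD : w ∈ uD := lt_of_le_of_lt hw (rseq_lt_one' _)
    have b1 := hni w hwD _ (rseq_mem_uD (t + 2)) (by rw [norm_rseq]; exact hw)
    have b2 := hl t
    have b3 := hl (t + 1)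
    have b4 := hni _ (rseq_mem_uD t) z hz (by rw [norm_rseq]; exact hz1)
    have b5 := hb w hwD
    have b6 : u z ≤ A ^ 2 * u w := by
      calc u z ≤ A * u (rseq (t + 1) : ℂ) := b4.trans b2
        _ ≤ A * (A * u (rseq (t + 1 + 1) : ℂ)) := by gcongr
        _ = A ^ 2 * u (rseq (t + 2) : ℂ) := by ring_nf
        _ ≤ _ := by gcongr
    rw [hM, le_div_iff₀ huz]
    calc ‖f w‖ * u z ≤ ‖f w‖ * (A ^ 2 * u w) := by gcongr
      _ = A ^ 2 * (u w * ‖f w‖) := by ring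
      _ ≤ A ^ 2 * 1 := by gcongr
      _ = _ := mul_one _
  have hρ : 0 < E / 2 := by positivity
  have hopen : IsOpen uD := isOpen_lt continuous_norm continuous_const
  have hsub : ∀ w : ℂ, ‖w‖ ≤ rseq (t + 1) → ∀ v ∈ Metric.closedBall w (E / 2),
      ‖v‖ ≤ rseq (t + 2) := by
    intro w hw v hv
    rw [mem_closedBall_iff_norm] at hv
    have : ‖v‖ ≤ ‖w‖ + ‖v - w‖ := by
      simpa using norm_add_le w (v - w)
    rw [hr2]
    rw [hr1] at hw
    nlinarith
  have hder : ∀ w ∈ Metric.closedBall (0 : ℂ) (rseq (t + 1)), ‖deriv f w‖ ≤ M / (E / 2) := by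
    intro w hw
    rw [mem_closedBall_zero_iff] at hw
    refine Complex.norm_deriv_le_of_forall_mem_sphere_norm_le hρ ?_ ?_
    · apply DifferentiableOn.diffContOnCl
      rw [closure_ball w hρ.ne']
      exact hf.mono fun v hv => lt_of_le_of_lt (hsub w hw v hv) (rseq_lt_one' _)
    · intro v hv
      exact hfb v (hsub w hw v (Metric.sphere_subset_closedBall hv))
  have hterm : ∀ j : ℕ, ‖f ((rseq (t + 2 + j + 1) : ℂ) * z) -
      f ((rseq (t + 2 + j) : ℂ) * z)‖ ≤ 2 * M * (1 / 2) ^ j := by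
    intro j
    have hmem : ∀ n, (rseq n : ℂ) * z ∈ Metric.closedBall (0 : ℂ) (rseq (t + 1)) := by
      intro n
      rw [mem_closedBall_zero_iff, norm_mul, norm_rseq]
      exact (mul_le_of_le_one_left (norm_nonneg _) (rseq_lt_one' n).le).trans hz2
    have key := Convex.norm_image_sub_le_of_norm_deriv_le (𝕜 := ℂ) (f := f)
      (s := Metric.closedBall (0 : ℂ) (rseq (t + 1))) (C := M / (E / 2))
      (fun w hw => hf.differentiableAt (hopen.mem_nhds
        (lt_of_le_of_lt (mem_closedBall_zero_iff.1 hw) (rseq_lt_one' _))))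
      hder (convex_closedBall _ _) (hmem (t + 2 + j)) (hmem (t + 2 + j + 1))
    refine key.trans ?_
    have hn : ‖(rseq (t + 2 + j + 1) : ℂ) * z - (rseq (t + 2 + j) : ℂ) * z‖
        ≤ E * (1 / 2) ^ j := by
      rw [← sub_mul, norm_mul, ← Complex.ofReal_sub, Complex.norm_real, Real.norm_eq_abs]
      exact (mul_le_of_le_one_right (abs_nonneg _) (le_of_lt hz)).trans (rseq_diff t j)
    calc _ ≤ M / (E / 2) * (E * (1 / 2) ^ j) := by gcongr
      _ = _ := by field_simp
  have hs : HasSum (fun j : ℕ => 2 * M * (1 / 2 : ℝ) ^ j) (2 * M * 2) :=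
    hasSum_geometric_two.mul_left _
  have hsum := Summable.of_nonneg_of_le (fun _ => norm_nonneg _) hterm hs.summable
  calc _ ≤ ∑' j : ℕ, 2 * M * (1 / 2 : ℝ) ^ j := hsum.tsum_le_tsum hterm hs.summable
    _ = 2 * M * 2 := hs.tsum_eq
    _ = _ := by rw [hM]; ring
end
end

section
/- Let 0 < a < 1 < A and let u be a radial non-increasing weight on 𝔻 satisfying (LOG 1) and (LOG 2) with constants a, A. Let f be holomorphic on 𝔻 with u(z)|f(z)| ≤ 1 for all z ∈ 𝔻. Then for every integer t ≥ 0 and every z ∈ 𝔻 with |z| ≥ r_t, one has Σ_{κ=1}^{t+1} |f(r_{κ+1}z) − f(r_κ z)| ≤ 2A²·(1/(1−a) + A²)/u(z). -/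
noncomputable section

open Complex

theorem rseq_nonneg_aux (k : ℕ) : 0 ≤ rseq k := by
  unfold rseq
  split_ifs
  · exact le_refl _
  · have : (1:ℝ) ≤ 2 ^ (2 ^ k) := one_le_pow₀ (by norm_num)
    have := (div_le_one (by positivity)).2 this
    linarith

theorem rseq_lt_aux (k : ℕ) : rseq k < 1 := by
  unfold rseq
  split_ifs
  · norm_num
  · have : (0:ℝ) < 1 / 2 ^ (2 ^ k) := by positivity
    linarith

theorem rseq_le_aux (k : ℕ) : rseq k ≤ rseq (k + 1) := by
  by_cases hk : k = 0
  · have := rseq_nonneg_aux (k + 1)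
    subst hk
    simpa [rseq] using this
  · unfold rseq
    rw [if_neg hk, if_neg (Nat.succ_ne_zero k)]
    have : (1:ℝ) / 2 ^ (2 ^ (k + 1)) ≤ 1 / 2 ^ (2 ^ k) := by
      apply one_div_le_one_div_of_le (by positivity)
      apply pow_le_pow_right₀ (by norm_num)
      exact Nat.pow_le_pow_right (by norm_num) (Nat.le_succ k)
    linarith

theorem rseq_norm_aux (k : ℕ) : ‖(rseq k : ℂ)‖ = rseq k := by
  rw [Complex.norm_real, Real.norm_of_nonneg (rseq_nonneg_aux k)]

theorem rseq_mem_aux (k : ℕ) : (rseq k : ℂ) ∈ uD := by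
  change ‖(rseq k : ℂ)‖ < 1
  rw [rseq_norm_aux]; exact rseq_lt_aux k

/-- head sum estimate
Σ_{κ=1}^{t+1} |f(r_{κ+1}z) − f(r_κ z)| ≤ 2A²(1/(1−a) + A²)/u(z) for |z| ≥ r_t. -/
theorem head_sum_estimate (a' A : ℝ) (ha0 : 0 < a') (ha1 : a' < 1) (hA : 1 < A)
    (u : ℂ → ℝ) (hw : IsWeight u) (hrad : Radial u) (hni : NonInc u)
    (hl1 : Log1 A u) (hl2 : Log2 a' u)
    (f : ℂ → ℂ) (hf : Holo f) (hbd : ∀ z ∈ uD, u z * ‖f z‖ ≤ 1) :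
    ∀ t : ℕ, ∀ z ∈ uD, rseq t ≤ ‖z‖ →
      ∑ κ ∈ Finset.Icc 1 (t + 1),
          ‖f ((rseq (κ + 1) : ℂ) * z) - f ((rseq κ : ℂ) * z)‖ ≤
        2 * A ^ 2 * (1 / (1 - a') + A ^ 2) / u z := by
  intro t z hz hzt
  have hz1 : ‖z‖ < 1 := hz
  have hA0 : 0 < A := by linarith
  have h1a : 0 < 1 - a' := by linarith
  have hpos : ∀ k, 0 < u (rseq k : ℂ) := fun k => hw.2 _ (rseq_mem_aux k)
  have hfb : ∀ j k : ℕ, rseq j ≤ rseq k →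
      ‖f ((rseq j : ℂ) * z)‖ ≤ 1 / u (rseq k : ℂ) := by
    intro j k hjk
    have hn : ‖(rseq j : ℂ) * z‖ ≤ rseq j := by
      rw [norm_mul, rseq_norm_aux]
      exact mul_le_of_le_one_right (rseq_nonneg_aux j) hz1.le
    have hm : (rseq j : ℂ) * z ∈ uD := lt_of_le_of_lt hn (rseq_lt_aux j)
    have h1 := hni _ hm _ (rseq_mem_aux k) (by rw [rseq_norm_aux]; linarith)
    rw [le_div_iff₀ (hpos k)]
    calc _ ≤ ‖f ((rseq j : ℂ) * z)‖ * u ((rseq j : ℂ) * z) := by gcongr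
      _ = u ((rseq j : ℂ) * z) * ‖f ((rseq j : ℂ) * z)‖ := mul_comm _ _
      _ ≤ 1 := hbd _ hm
  have hterm : ∀ k : ℕ, ‖f ((rseq (k + 1 + 1) : ℂ) * z) - f ((rseq (k + 1) : ℂ) * z)‖
      ≤ 2 * A ^ 2 / u (rseq k : ℂ) := by
    intro k
    have e1 := hfb (k + 1 + 1) (k + 1 + 1) le_rfl
    have e2 := hfb (k + 1) (k + 1 + 1) (rseq_le_aux _)
    have e3 : 1 / u (rseq (k + 1 + 1) : ℂ) ≤ A ^ 2 / u (rseq k : ℂ) := by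
      rw [div_le_div_iff₀ (hpos _) (hpos _), one_mul]
      calc _ ≤ A * u (rseq (k + 1) : ℂ) := hl1 k
        _ ≤ A * (A * u (rseq (k + 1 + 1) : ℂ)) := by gcongr; exact hl1 (k + 1)
        _ = _ := by ring
    calc _ ≤ _ := norm_sub_le _ _
      _ ≤ A ^ 2 / u (rseq k : ℂ) + A ^ 2 / u (rseq k : ℂ) := by linarith
      _ = _ := by ring
  have hsum : ∀ s : ℕ, ∑ κ ∈ Finset.Icc 1 (s + 1),
      ‖f ((rseq (κ + 1) : ℂ) * z) - f ((rseq κ : ℂ) * z)‖ ≤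
        2 * A ^ 2 / (1 - a') / u (rseq s : ℂ) := by
    intro s
    induction s with
    | zero =>
      simp only [zero_add, Finset.Icc_self, Finset.sum_singleton]
      refine (hterm 0).trans ?_
      apply div_le_div_of_nonneg_right _ (hpos 0).le
      rw [le_div_iff₀ h1a]
      have : 0 < 2 * A ^ 2 * a' := by positivity
      linarith
    | succ s ih =>
      rw [Finset.sum_Icc_succ_top (by omega)]
      have h2 : 2 * A ^ 2 / (1 - a') / u (rseq s : ℂ) ≤
          2 * A ^ 2 / (1 - a') * a' / u (rseq (s + 1) : ℂ) := by
        rw [div_le_div_iff₀ (hpos _) (hpos _), mul_assoc]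
        gcongr
        exact hl2 s
      have h3 := hterm (s + 1)
      calc _ ≤ 2 * A ^ 2 / (1 - a') * a' / u (rseq (s + 1) : ℂ)
            + 2 * A ^ 2 / u (rseq (s + 1) : ℂ) := by linarith
        _ = _ := by
          have := (hpos (s + 1)).ne'
          have := h1a.ne'
          field_simp
          ring
  have huz : 0 < u z := hw.2 z hz
  have hle : u z ≤ u (rseq t : ℂ) :=
    hni _ (rseq_mem_aux t) _ hz (by rw [rseq_norm_aux]; exact hzt)
  refine (hsum t).trans ?_
  calc _ ≤ 2 * A ^ 2 / (1 - a') / u z := by gcongr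
    _ ≤ _ := by
      gcongr
      rw [div_eq_mul_one_div]
      gcongr
      have : 0 < A ^ 2 := by positivity
      linarith
end
end
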